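/- Let q be an odd prime, ℓ an odd prime with ℓ | q − 1, and let e₁, ..., e_{ℓ−1} ∈ F_q be the primitive ℓ-th roots of unity. The number of matrices σ ∈ GL₂(F_q) having at least one eigenvalue among {e₁,...,e_{ℓ−1}} equals (ℓ−1)·(q³ − (ℓ/2 − 1)q² − (ℓ/2 + 1)q), i.e., equals ((ℓ−1)(q−ℓ) + binom(ℓ−1, 2))·(q+1)q + (ℓ−1) + (ℓ−1)(q+1)(q−1). -/

import Mathlib

theorem aux_roots (q ℓ : ℕ) [Fact q.Prime] (hℓ : ℓ.Prime) (hdvd : ℓ ∣ q - 1) :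
    ((Finset.univ.filter (fun e : ZMod q => e ^ ℓ = 1 ∧ e ≠ 1)).card) = ℓ - 1 := by
  obtain ⟨g, hg⟩ := IsCyclic.exists_ofOrder_eq_natCard (α := (ZMod q)ˣ)
  rw [Nat.card_eq_fintype_card, ZMod.card_units] at hg
  have hq := (Fact.out : q.Prime).two_le
  obtain ⟨m, hm⟩ := hdvd
  have hp : IsPrimitiveRoot g (q - 1) := hg ▸ IsPrimitiveRoot.orderOf g
  have hp2 : IsPrimitiveRoot (g ^ m) ℓ := hp.pow (by omega) (by rw [hm, mul_comm])
  have hp3 : IsPrimitiveRoot ((g ^ m : (ZMod q)ˣ) : ZMod q) ℓ :=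
    IsPrimitiveRoot.coe_units_iff.mpr hp2
  have hc := hp3.card_nthRootsFinset
  have : (Finset.univ.filter (fun e : ZMod q => e ^ ℓ = 1 ∧ e ≠ 1))
      = (Polynomial.nthRootsFinset ℓ (1 : ZMod q)).erase 1 := by
    ext e
    simp [Polynomial.mem_nthRootsFinset hℓ.pos, and_comm]
  rw [this, Finset.card_erase_of_mem, hc]
  simp [Polynomial.mem_nthRootsFinset hℓ.pos]

theorem aux_bc (q : ℕ) [Fact q.Prime] (k : ZMod q) :
    ((Finset.univ.filter (fun p : ZMod q × ZMod q => p.1 * p.2 = k)).card : ℤ)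
      = (q - 1) + if k = 0 then (q : ℤ) else 0 := by
  have h1 : (Finset.univ.filter (fun p : ZMod q × ZMod q => p.1 * p.2 = k)).card
      = ∑ b : ZMod q, (Finset.univ.filter (fun c : ZMod q => b * c = k)).card := by
    simp only [Finset.card_filter]
    rw [Fintype.sum_prod_type]
  have h2 : ∀ b : ZMod q, b ≠ 0 → (Finset.univ.filter (fun c : ZMod q => b * c = k)).card = 1 := by
    intro b hb
    rw [Finset.card_eq_one]
    refine ⟨b⁻¹ * k, ?_⟩
    ext c
    simp only [Finset.mem_filter, Finset.mem_univ, true_and, Finset.mem_singleton]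
    constructor
    · rintro rfl; field_simp
    · rintro rfl; field_simp
  have hq := (Fact.out : q.Prime).two_le
  rw [h1, ← Finset.add_sum_erase _ _ (Finset.mem_univ (0 : ZMod q)),
    Finset.sum_congr rfl (fun b hb => h2 b (Finset.ne_of_mem_erase hb))]
  simp only [zero_mul, Finset.sum_const, Finset.card_erase_of_mem (Finset.mem_univ _),
    Finset.card_univ, ZMod.card, smul_eq_mul, mul_one]
  by_cases hk : k = 0
  · subst hk
    simp [ZMod.card]
    omega
  · simp [hk, Ne.symm hk]
    omega

theorem aux_mat (q : ℕ) [Fact q.Prime] (e f : ZMod q) :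
    ((Finset.univ.filter (fun M : Matrix (Fin 2) (Fin 2) (ZMod q) =>
      M.trace = e + f ∧ M.det = e * f)).card : ℤ)
      = q * (q - 1) + (if e = f then (q : ℤ) else 2 * q) := by
  have h1 : (Finset.univ.filter (fun M : Matrix (Fin 2) (Fin 2) (ZMod q) =>
      M.trace = e + f ∧ M.det = e * f)).card
      = (Finset.univ.sigma (fun a : ZMod q => Finset.univ.filter
          (fun p : ZMod q × ZMod q => p.1 * p.2 = -((a - e) * (a - f))))).card := by
    refine Finset.card_nbij' (fun M => ⟨M 0 0, (M 0 1, M 1 0)⟩)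
      (fun s => !![s.1, s.2.1; s.2.2, e + f - s.1]) ?_ ?_ ?_ ?_
    · intro M hM
      simp [Matrix.trace_fin_two, Matrix.det_fin_two] at hM ⊢
      obtain ⟨h1, h2⟩ := hM
      linear_combination (M 0 0) * h1 - h2
    · intro s hs
      simp [Matrix.trace_fin_two, Matrix.det_fin_two] at hs ⊢
      linear_combination -hs
    · intro M hM
      simp [Matrix.trace_fin_two, Matrix.det_fin_two] at hM ⊢
      obtain ⟨h1, h2⟩ := hM
      ext i j
      fin_cases i <;> fin_cases j <;> simp
      linear_combination -h1
    · intro s hs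
      simp
  rw [h1, Finset.card_sigma]
  push_cast
  simp only [aux_bc]
  rw [Finset.sum_add_distrib]
  have h3 : (Finset.univ.filter (fun a : ZMod q => -((a - e) * (a - f)) = 0)) = {e, f} := by
    ext a; simp [sub_eq_zero]
  rw [← Finset.sum_filter, h3]
  simp only [Finset.sum_const, Finset.card_univ, ZMod.card, nsmul_eq_mul]
  split_ifs with h
  · simp [h]
  · rw [Finset.card_pair h]; push_cast; ring

theorem aux_gl (q : ℕ) [Fact q.Prime] (e f : ZMod q) (he : e ≠ 0) :
    ((Finset.univ.filter (fun σ : GL (Fin 2) (ZMod q) =>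
      (σ : Matrix (Fin 2) (Fin 2) (ZMod q)).trace = e + f ∧
      (σ : Matrix (Fin 2) (Fin 2) (ZMod q)).det = e * f)).card : ℤ)
      = if f = 0 then 0 else q * (q - 1) + (if e = f then (q : ℤ) else 2 * q) := by
  by_cases hf : f = 0
  · subst hf
    rw [if_pos rfl]
    rw [Nat.cast_eq_zero, Finset.card_eq_zero, Finset.filter_eq_empty_iff]
    rintro σ - ⟨-, h⟩
    have := (Matrix.isUnit_iff_isUnit_det _).mp σ.isUnit
    rw [h] at this
    simp at this
  · rw [if_neg hf, ← aux_mat q e f]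
    norm_cast
    refine Finset.card_nbij (fun σ => (σ : Matrix (Fin 2) (Fin 2) (ZMod q))) ?_ ?_ ?_
    · intro σ hσ; simpa using hσ
    · intro a _ b _ h; exact Units.ext h
    · intro M hM
      simp at hM
      have hu : IsUnit M := by
        rw [Matrix.isUnit_iff_isUnit_det, hM.2]
        simp_all
      obtain ⟨u, rfl⟩ := hu
      exact ⟨u, by simpa using hM, rfl⟩

theorem stmt14 (q ℓ : ℕ) [Fact q.Prime] (hqodd : Odd q) (hℓ : ℓ.Prime) (hℓodd : Odd ℓ)
    (hdvd : ℓ ∣ q - 1) :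
    ((Finset.univ.filter
      (fun σ : GL (Fin 2) (ZMod q) =>
        ∃ e : ZMod q, e ^ ℓ = 1 ∧ e ≠ 1 ∧
          e ^ 2 - Matrix.trace (σ : Matrix (Fin 2) (Fin 2) (ZMod q)) * e +
            Matrix.det (σ : Matrix (Fin 2) (Fin 2) (ZMod q)) = 0)).card : ℤ) =
      (((ℓ : ℤ) - 1) * ((q : ℤ) - (ℓ : ℤ)) + ((ℓ - 1).choose 2 : ℤ)) * (((q : ℤ) + 1) * (q : ℤ))
        + ((ℓ : ℤ) - 1) + ((ℓ : ℤ) - 1) * (((q : ℤ) + 1) * ((q : ℤ) - 1)) := by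
  classical
  set S := Finset.univ.filter (fun e : ZMod q => e ^ ℓ = 1 ∧ e ≠ 1) with hS
  have hScard : S.card = ℓ - 1 := aux_roots q ℓ hℓ hdvd
  have hl2 := hℓ.two_le
  have hScardZ : (S.card : ℤ) = ℓ - 1 := by rw [hScard]; omega
  have hS0 : ∀ e ∈ S, e ≠ 0 := by
    rintro e he rfl
    simp [hS, hℓ.ne_zero] at he
  let c : ZMod q → ZMod q → ℤ := fun e f => if f ∈ S ∧ f ≠ e then 1 else 2
  let P : GL (Fin 2) (ZMod q) → ZMod q → Prop := fun σ e =>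
    e ^ 2 - Matrix.trace (σ : Matrix (Fin 2) (Fin 2) (ZMod q)) * e +
            Matrix.det (σ : Matrix (Fin 2) (Fin 2) (ZMod q)) = 0
  have hP : ∀ σ e f, P σ e → (P σ f ↔ f = e ∨ f = Matrix.trace
      (σ : Matrix (Fin 2) (Fin 2) (ZMod q)) - e) := by
    intro σ e f h
    simp only [P] at h ⊢
    rw [← sub_eq_zero (a := f) (b := e), ← sub_eq_zero (a := f)
      (b := Matrix.trace (σ : Matrix (Fin 2) (Fin 2) (ZMod q)) - e), ← mul_eq_zero]
    constructor
    · intro hh; linear_combination hh - h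
    · intro hh; linear_combination hh + h
  have hpt : ∀ σ : GL (Fin 2) (ZMod q),
      (∑ e ∈ S, if P σ e then c e (Matrix.trace
        (σ : Matrix (Fin 2) (Fin 2) (ZMod q)) - e) else 0)
      = if (∃ e, e ^ ℓ = 1 ∧ e ≠ 1 ∧ P σ e) then 2 else 0 := by
    intro σ
    rw [← Finset.sum_filter]
    split_ifs with h
    · obtain ⟨e, h1, h2, h3⟩ := h
      have heS : e ∈ S := by simp [hS, h1, h2]
      set t := Matrix.trace (σ : Matrix (Fin 2) (Fin 2) (ZMod q)) with ht
      by_cases hf : t - e ∈ S ∧ t - e ≠ e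
      · have : S.filter (P σ) = {e, t - e} := by
          ext x
          simp only [Finset.mem_filter, hP σ e x h3, Finset.mem_insert, Finset.mem_singleton]
          constructor
          · exact fun h => h.2
          · rintro (rfl | rfl)
            · exact ⟨heS, Or.inl rfl⟩
            · exact ⟨hf.1, Or.inr rfl⟩
        rw [this, Finset.sum_pair hf.2.symm]
        simp only [c, ← ht]
        rw [if_pos hf]
        rw [if_pos (by rw [sub_sub_cancel]; exact ⟨heS, hf.2.symm⟩)]
        norm_num
      · have : S.filter (P σ) = {e} := by
          ext x
          simp only [Finset.mem_filter, hP σ e x h3, Finset.mem_singleton]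
          constructor
          · rintro ⟨hx, rfl | rfl⟩
            · rfl
            · by_contra hne
              exact hf ⟨hx, hne⟩
          · rintro rfl
            exact ⟨heS, Or.inl rfl⟩
        rw [this, Finset.sum_singleton]
        simp only [c, ← ht]
        rw [if_neg hf]
    · apply Finset.sum_eq_zero
      intro e he
      simp only [hS, Finset.mem_filter, Finset.mem_univ, true_and] at he
      exact absurd ⟨e, he.1.1, he.1.2, he.2⟩ h
  have hfib : ∀ e ∈ S, (∑ σ : GL (Fin 2) (ZMod q), if P σ e then c e (Matrix.trace
        (σ : Matrix (Fin 2) (Fin 2) (ZMod q)) - e) else 0)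
      = ∑ f : ZMod q, c e f *
        (if f = 0 then 0 else q * (q - 1) + (if e = f then (q : ℤ) else 2 * q)) := by
    intro e he
    rw [← Finset.sum_fiberwise (s := Finset.univ) (g := fun σ : GL (Fin 2) (ZMod q) =>
      Matrix.trace (σ : Matrix (Fin 2) (Fin 2) (ZMod q)) - e)]
    refine Finset.sum_congr rfl fun f _ => ?_
    rw [← aux_gl q e f (hS0 e he), ← Finset.sum_filter, Finset.filter_filter,
      Finset.sum_congr rfl (g := fun _ => c e f), Finset.sum_const, nsmul_eq_mul, mul_comm]
    · congr 3
      ext σ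
      simp only [Finset.mem_filter, Finset.mem_univ, true_and, P]
      constructor
      · rintro ⟨h1, h2⟩
        exact ⟨by linear_combination h1, by linear_combination h2 + e * h1⟩
      · rintro ⟨h1, h2⟩
        exact ⟨by linear_combination h1, by linear_combination h2 - e * h1⟩
    · intro σ hσ
      simp only [Finset.mem_filter, Finset.mem_univ, true_and] at hσ
      rw [hσ.1]
  have hval : ∀ e ∈ S, (∑ f : ZMod q, c e f *
        (if f = 0 then 0 else q * (q - 1) + (if e = f then (q : ℤ) else 2 * q)))
      = 2 * ((q : ℤ) - ℓ) * (q * (q + 1)) + (ℓ - 2) * (q * (q + 1)) + 2 * q ^ 2 := by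
    intro e he
    have h0 := hS0 e he
    have hz : (0 : ZMod q) ∉ S := fun h => hS0 0 h rfl
    have : ∀ f : ZMod q, c e f *
        (if f = 0 then 0 else q * (q - 1) + (if e = f then (q : ℤ) else 2 * q))
        = 2 * (q * (q + 1)) + (if f ∈ S then -((q : ℤ) * (q + 1)) else 0)
          + (if f = 0 then -(2 * ((q : ℤ) * (q + 1))) else 0)
          + (if f = e then 2 * (q : ℤ) ^ 2 - q * (q + 1) else 0) := by
      intro f
      simp only [c]
      by_cases hf0 : f = 0
      · subst hf0
        simp [hz, h0.symm]
      · by_cases hfe : f = e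
        · subst hfe
          simp [h0, he]; ring
        · by_cases hfS : f ∈ S
          · simp [hf0, hfe, Ne.symm hfe, hfS]; ring
          · simp [hf0, hfe, Ne.symm hfe, hfS]; ring
    rw [Finset.sum_congr rfl (fun f _ => this f)]
    simp only [Finset.sum_add_distrib, Finset.sum_ite_eq', Finset.sum_ite_mem,
      Finset.univ_inter, Finset.sum_const, Finset.card_univ, ZMod.card, nsmul_eq_mul,
      Finset.mem_univ, if_true, hScardZ]
    ring
  have hmain : 2 * ((Finset.univ.filter (fun σ : GL (Fin 2) (ZMod q) =>
      ∃ e, e ^ ℓ = 1 ∧ e ≠ 1 ∧ P σ e)).card : ℤ) = (ℓ - 1) *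
      (2 * ((q : ℤ) - ℓ) * (q * (q + 1)) + (ℓ - 2) * (q * (q + 1)) + 2 * q ^ 2) := by
    rw [← hScardZ, ← nsmul_eq_mul, ← Finset.sum_const,
      ← Finset.sum_congr rfl (fun e he => (hfib e he).trans (hval e he)), Finset.sum_comm,
      Finset.sum_congr rfl (fun σ _ => hpt σ), ← Finset.sum_filter, Finset.sum_const,
      nsmul_eq_mul, mul_comm]
  have hch : 2 * ((ℓ - 1).choose 2 : ℤ) = (ℓ - 1) * (ℓ - 2) := by
    obtain ⟨m, rfl⟩ : ∃ m, ℓ = m + 2 := ⟨ℓ - 2, by omega⟩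
    have h2 : (m + 1).choose 2 * 2 = (m + 1) * m := by
      rw [Nat.choose_two_right,
        Nat.div_mul_cancel (Nat.even_mul_pred_self (m + 1)).two_dvd]
      simp
    have h3 : (((m + 1).choose 2 : ℕ) : ℤ) * 2 = (m + 1) * m := by exact_mod_cast h2
    rw [show m + 2 - 1 = m + 1 by omega]
    push_cast
    linear_combination h3
  have hconv : ((Finset.univ.filter
      (fun σ : GL (Fin 2) (ZMod q) =>
        ∃ e : ZMod q, e ^ ℓ = 1 ∧ e ≠ 1 ∧
          e ^ 2 - Matrix.trace (σ : Matrix (Fin 2) (Fin 2) (ZMod q)) * e +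
            Matrix.det (σ : Matrix (Fin 2) (Fin 2) (ZMod q)) = 0)).card : ℤ)
      = ((Finset.univ.filter (fun σ : GL (Fin 2) (ZMod q) =>
      ∃ e, e ^ ℓ = 1 ∧ e ≠ 1 ∧ P σ e)).card : ℤ) := by
    congr!
  have h2 : (2 : ℤ) ≠ 0 := by norm_num
  apply mul_left_cancel₀ h2
  rw [hconv, hmain]
  linear_combination (-((q : ℤ) + 1) * q) * hch
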